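/- arXiv:1906.07437 — 3 statements merged into one kernel-verified Lean document; each statement's English description precedes it below -/
import Mathlib

section
/- (Reduction underlying NP-hardness of inverting a real-valued four-layer ReLU network.) Let φ be a 3-CNF formula over k Boolean variables with m clauses, and let W ∈ ℝ^{m×k} be its clause matrix. Define clamp : ℝ → ℝ by clamp(t) = min(max(t,−1),1), applied coordinate-wise, and for z ∈ ℝ^k set v = clamp(z). Then φ is satisfiable if and only if there exists z ∈ ℝ^k such that Σ_{i=1}^{m} ReLU((Wv)_i − 2) = 0 and Σ_{j=1}^{k} |v_j| = k. (The map z ↦ (Σ_i ReLU((W·clamp(z))_i − 2), Σ_j |clamp(z)_j|) is realizable as a four-layer ReLU network, so inverting four-layer ReLU networks over real inputs encodes 3SAT.) -/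
/-- ReLU applied to a real number. -/
noncomputable def relu (t : ℝ) : ℝ := max t 0

/-- `clamp t = min(max(t,−1),1)`. -/
noncomputable def clamp (t : ℝ) : ℝ := min (max t (-1)) 1

/-- A 3-CNF formula over `k` Boolean variables with `m` clauses: clause `i` consists of
three literals, each a pair of a variable index and a sign (`true` = positive literal). -/
structure CNF3 (k m : ℕ) where
  lit : Fin m → Fin 3 → Fin k × Bool

/-- A Boolean assignment `σ` satisfies the formula if every clause contains at least one
satisfied literal (a positive literal on variable `j` is satisfied iff `σ j = true`,
a negative literal iff `σ j = false`). -/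
def CNF3.Satisfiable {k m : ℕ} (φ : CNF3 k m) : Prop :=
  ∃ σ : Fin k → Bool, ∀ i : Fin m, ∃ l : Fin 3, σ (φ.lit i l).1 = (φ.lit i l).2

/-- The clause matrix `W ∈ ℝ^{m×k}`: entry `W i j` is the sum, over occurrences of
variable `j` in clause `i`, of `−1` for each positive literal and `+1` for each
negative literal. -/
noncomputable def CNF3.clauseMatrix {k m : ℕ} (φ : CNF3 k m) : Matrix (Fin m) (Fin k) ℝ :=
  Matrix.of fun i j =>
    ∑ l : Fin 3, if (φ.lit i l).1 = j then (if (φ.lit i l).2 then (-1 : ℝ) else 1) else 0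

/-!
Every coordinate of `clamp z` has absolute value at most `1`, so the `k` absolute values sum to `k`
only if each coordinate is `±1`: the second equation says exactly that `clamp z` is a Boolean
assignment. At an assignment, a satisfied literal contributes `-1` to its row of `W v` and a
violated literal `+1`, so row `i` equals `3` minus twice the number of satisfied literals of clause
`i`. It is at most `2` precisely when the clause is satisfied, and the sum of ReLUs vanishes
precisely when this holds for every row.
-/

open Finset Matrix

section Relu

theorem relu_nonneg (t : ℝ) : 0 ≤ relu t :=
  le_max_right t 0

theorem relu_eq_zero_iff {t : ℝ} : relu t = 0 ↔ t ≤ 0 :=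
  max_eq_right_iff

theorem sum_relu_eq_zero_iff {ι : Type*} {s : Finset ι} {f : ι → ℝ} :
    ∑ i ∈ s, relu (f i) = 0 ↔ ∀ i ∈ s, f i ≤ 0 := by
  simp only [sum_eq_zero_iff_of_nonneg fun i _ => relu_nonneg (f i), relu_eq_zero_iff]

end Relu

section Clamp

theorem abs_clamp_le_one (t : ℝ) : |clamp t| ≤ 1 :=
  abs_le.2 ⟨le_min (le_max_right t (-1)) (by norm_num), min_le_right _ 1⟩

theorem clamp_of_abs_le_one {t : ℝ} (ht : |t| ≤ 1) : clamp t = t := by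
  obtain ⟨hlower, hupper⟩ := abs_le.1 ht
  rw [clamp, max_eq_left hlower, min_eq_left hupper]

theorem sum_abs_clamp_eq_card_iff {ι : Type*} {s : Finset ι} {z : ι → ℝ} :
    ∑ j ∈ s, |clamp (z j)| = #s ↔ ∀ j ∈ s, |clamp (z j)| = 1 := by
  have hcard : (#s : ℝ) = ∑ _j ∈ s, 1 := by simp
  rw [hcard, sum_eq_sum_iff_of_le fun j _ => abs_clamp_le_one (z j)]

end Clamp

section BoolSign

/-- The encoding of a truth value as a real sign, `1` for true and `-1` for false, which turns
Boolean assignments into vectors in `{-1, 1}^k`. -/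
def boolSign (b : Bool) : ℝ := if b then 1 else -1

theorem abs_boolSign (b : Bool) : |boolSign b| = 1 := by
  cases b <;> simp [boolSign]

theorem clamp_boolSign (b : Bool) : clamp (boolSign b) = boolSign b :=
  clamp_of_abs_le_one (abs_boolSign b).le

theorem abs_eq_one_iff_exists_boolSign {x : ℝ} : |x| = 1 ↔ ∃ b, x = boolSign b := by
  simp [boolSign, abs_eq zero_le_one, or_comm]

theorem boolSign_mul_boolSign (a b : Bool) :
    boolSign a * boolSign b = if a = b then 1 else -1 := by
  cases a <;> cases b <;> simp [boolSign]

theorem sum_abs_clamp_eq_card_iff_exists_boolSign {ι : Type*} [Fintype ι] {z : ι → ℝ} :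
    ∑ j, |clamp (z j)| = Fintype.card ι ↔ ∃ σ : ι → Bool, ∀ j, clamp (z j) = boolSign (σ j) := by
  simp only [← card_univ, sum_abs_clamp_eq_card_iff, mem_univ, forall_const,
    abs_eq_one_iff_exists_boolSign, Classical.skolem]

end BoolSign

namespace CNF3

variable {k m : ℕ} (φ : CNF3 k m)

theorem clauseMatrix_mulVec (v : Fin k → ℝ) (i : Fin m) :
    (φ.clauseMatrix *ᵥ v) i = -∑ l, boolSign (φ.lit i l).2 * v (φ.lit i l).1 := by
  have entry_eq (j : Fin k) :
      φ.clauseMatrix i j = ∑ l, if (φ.lit i l).1 = j then -boolSign (φ.lit i l).2 else 0 := by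
    simp only [clauseMatrix, of_apply, boolSign, neg_ite, neg_neg]
  simp only [mulVec, dotProduct, entry_eq, sum_mul]
  rw [sum_comm]
  simp [ite_mul]

theorem clauseMatrix_mulVec_boolSign (σ : Fin k → Bool) (i : Fin m) :
    (φ.clauseMatrix *ᵥ fun j => boolSign (σ j)) i =
      3 - 2 * #{l | σ (φ.lit i l).1 = (φ.lit i l).2} := by
  have literal_eq (l : Fin 3) : -(boolSign (φ.lit i l).2 * boolSign (σ (φ.lit i l).1)) =
      1 - 2 * if σ (φ.lit i l).1 = (φ.lit i l).2 then 1 else 0 := by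
    rw [mul_comm, boolSign_mul_boolSign]
    split_ifs <;> norm_num
  rw [clauseMatrix_mulVec, ← sum_neg_distrib]
  simp only [literal_eq, sum_sub_distrib, ← mul_sum, sum_boole]
  simp

theorem clauseMatrix_mulVec_boolSign_le_two_iff (σ : Fin k → Bool) (i : Fin m) :
    (φ.clauseMatrix *ᵥ fun j => boolSign (σ j)) i ≤ 2 ↔
      ∃ l, σ (φ.lit i l).1 = (φ.lit i l).2 := by
  have three_sub_two_mul_le_two_iff (n : ℕ) : (3 - 2 * n : ℝ) ≤ 2 ↔ 0 < n := by
    rw [sub_le_iff_le_add]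
    norm_cast
    lia
  rw [clauseMatrix_mulVec_boolSign, three_sub_two_mul_le_two_iff, card_pos,
    filter_nonempty_iff]
  simp only [mem_univ, true_and]

theorem satisfiable_iff_exists_clauseMatrix_mulVec_boolSign_le_two :
    φ.Satisfiable ↔
      ∃ σ : Fin k → Bool, ∀ i, (φ.clauseMatrix *ᵥ fun j => boolSign (σ j)) i ≤ 2 := by
  simp only [Satisfiable, clauseMatrix_mulVec_boolSign_le_two_iff]

end CNF3

/-- **Reduction underlying NP-hardness of inverting a real-valued four-layer ReLU
network.**  With `v = clamp(z)` applied coordinate-wise, a 3-CNF formula `φ` with clause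
matrix `W` is satisfiable iff there exists `z ∈ ℝ^k` such that
`Σ_{i=1}^{m} ReLU((Wv)_i − 2) = 0` and `Σ_{j=1}^{k} |v_j| = k`. -/
theorem cnf3_satisfiable_iff_real_network_inversion
    (k m : ℕ) (φ : CNF3 k m) :
    φ.Satisfiable ↔
      ∃ z : Fin k → ℝ,
        ∑ i : Fin m, relu (φ.clauseMatrix.mulVec (fun j => clamp (z j)) i - 2) = 0 ∧
        ∑ j : Fin k, |clamp (z j)| = (k : ℝ) := by
  have sum_abs_eq_iff (z : Fin k → ℝ) :
      ∑ j, |clamp (z j)| = (k : ℝ) ↔ ∃ σ : Fin k → Bool, ∀ j, clamp (z j) = boolSign (σ j) := by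
    rw [← sum_abs_clamp_eq_card_iff_exists_boolSign, Fintype.card_fin]
  simp only [φ.satisfiable_iff_exists_clauseMatrix_mulVec_boolSign_le_two, sum_relu_eq_zero_iff,
    mem_univ, forall_const, sub_nonpos, sum_abs_eq_iff]
  constructor
  · rintro ⟨σ, hσ⟩
    refine ⟨fun j => boolSign (σ j), ?_, σ, fun j => clamp_boolSign (σ j)⟩
    simpa only [clamp_boolSign] using hσ
  · rintro ⟨z, hz, σ, hσ⟩
    exact ⟨σ, by simpa only [hσ] using hz⟩
end

section
/- (Exact recovery for expansive random ReLU networks.) There exist absolute constants c > 0 and C > 0 with the following property. Let d ≥ 1 and let n₀ = k, n₁, …, n_d be positive integers with n_i ≥ (21/10)·n_{i−1} for every i ∈ {1,…,d}. Let W₁,…,W_d be independent random matrices, where W_i ∈ ℝ^{n_i × n_{i−1}} has i.i.d. standard Gaussian entries, and let G(z) = ReLU(W_d · ReLU(W_{d−1} ⋯ ReLU(W₁ z) ⋯ )). Then for any fixed z* ∈ ℝ^k, with probability at least 1 − C·exp(−c·k) over the draw of the weights, every z ∈ ℝ^k with G(z) = G(z*) satisfies z = z*, and moreover every intermediate layer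 map is invertible at the corresponding intermediate activation, so z* can be obtained from x = G(z*) by solving d layer-wise linear systems. -/
open MeasureTheory ProbabilityTheory

/-- The law of a random `n × k` matrix (viewed as `Fin n → Fin k → ℝ`) with i.i.d.
standard Gaussian entries: the product over all entries of `N(0,1)`. -/
noncomputable def stdGaussianMatrix (n k : ℕ) : Measure (Fin n → Fin k → ℝ) :=
  Measure.pi fun _ : Fin n => Measure.pi fun _ : Fin k => gaussianReal 0 1

/-- The joint law of `d` independent Gaussian weight matrices, where the `i`-th matrix
has shape `n (i+1) × n i`. -/
noncomputable def netGaussian (d : ℕ) (n : ℕ → ℕ) :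
    Measure (∀ i : Fin d, Fin (n (i.1 + 1)) → Fin (n i.1) → ℝ) :=
  Measure.pi fun i : Fin d => stdGaussianMatrix (n (i.1 + 1)) (n i.1)

/-- Extend a `Fin d`-indexed family of weight matrices to an `ℕ`-indexed family
(by zero beyond `d`). -/
noncomputable def extendW (d : ℕ) (n : ℕ → ℕ)
    (W' : ∀ i : Fin d, Fin (n (i.1 + 1)) → Fin (n i.1) → ℝ) :
    ∀ i : ℕ, Fin (n (i + 1)) → Fin (n i) → ℝ :=
  fun i => if h : i < d then W' ⟨i, h⟩ else 0

/-- The output of the first `j` ReLU layers of the network with weights `W` on input `z`: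
`layerOut n W 0 z = z` and `layerOut n W (j+1) z = ReLU(W_j · layerOut n W j z)`. -/
noncomputable def layerOut (n : ℕ → ℕ) (W : ∀ i : ℕ, Fin (n (i + 1)) → Fin (n i) → ℝ) :
    (j : ℕ) → (Fin (n 0) → ℝ) → Fin (n j) → ℝ
  | 0, z => z
  | j + 1, z => fun i => relu ((Matrix.of (W j)).mulVec (layerOut n W j z) i)

/-!
Negating rows of a Gaussian matrix does not change its law, so the failure probability of one layer
at a fixed activation `y` is the average, over all sets of rows to negate, of the failure
probability for the negated matrix. For rows in general position the sets of rows whose negation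
makes recovery fail shatter no set of more than `k` rows, `k` being the input dimension: if `y ≠ 0`,
choosing the signs so that all these rows are active at `y` determines `y`, and if `y = 0`, choosing
them along a linear relation between the rows leaves `0` as the only vector on which no row is
active. By Sauer–Shelah a layer with `m` rows therefore fails with probability at most
`P(Bin(m, 1/2) ≤ k)`, which Hoeffding's inequality bounds by `exp (-2 δ² m)` when
`k ≤ (1/2 - δ) m`. The activation entering a layer is independent of its weights, and the sizes of
the layers grow, so the union bound over the layers is a geometric series.
-/

open Finset Module
open scoped Matrix

section CombinatorialBounds

lemma sum_choose_mul_pow_le {x : ℝ} (hx₀ : 0 ≤ x) (hx₁ : x ≤ 1) (n k : ℕ) :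
    (∑ i ∈ Iic k, (n.choose i : ℝ)) * x ^ k ≤ (1 + x) ^ n := by
  have choose_eq_zero : ∀ i ∈ Iic k, i ∉ Iic k ∩ range (n + 1) → (n.choose i : ℝ) * x ^ i = 0 := by
    intro i hi hin
    have : n < i := by simp_all
    simp [Nat.choose_eq_zero_of_lt this]
  calc (∑ i ∈ Iic k, (n.choose i : ℝ)) * x ^ k
      ≤ ∑ i ∈ Iic k, (n.choose i : ℝ) * x ^ i := by
        rw [sum_mul]
        refine sum_le_sum fun i hi => ?_
        gcongr 1
        exact pow_le_pow_of_le_one hx₀ hx₁ (mem_Iic.1 hi)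
    _ = ∑ i ∈ Iic k ∩ range (n + 1), (n.choose i : ℝ) * x ^ i :=
        (sum_subset inter_subset_left choose_eq_zero).symm
    _ ≤ ∑ i ∈ range (n + 1), (n.choose i : ℝ) * x ^ i :=
        sum_le_sum_of_subset_of_nonneg inter_subset_right fun _ _ _ => by positivity
    _ = (1 + x) ^ n := by simp [add_comm (1 : ℝ), add_pow, mul_comm]

lemma one_add_exp_neg_le (δ : ℝ) :
    1 + Real.exp (-(4 * δ)) ≤ 2 * Real.exp (2 * δ ^ 2 - 2 * δ) := by
  calc 1 + Real.exp (-(4 * δ)) = 2 * (Real.cosh (2 * δ) * Real.exp (-(2 * δ))) := by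
        rw [Real.cosh_eq, div_mul_eq_mul_div, add_mul, ← Real.exp_add, ← Real.exp_add,
          add_neg_cancel, Real.exp_zero]
        ring_nf
    _ ≤ 2 * (Real.exp ((2 * δ) ^ 2 / 2) * Real.exp (-(2 * δ))) := by
        gcongr
        exact Real.cosh_le_exp_half_sq _
    _ = 2 * Real.exp (2 * δ ^ 2 - 2 * δ) := by
        rw [← Real.exp_add]
        ring_nf

/-- Hoeffding's inequality for `Bin(n, 1/2)`, by the Chernoff bound at `x = exp (-4 * δ)`. -/
lemma sum_choose_le_two_pow_mul_exp {δ : ℝ} (hδ : 0 ≤ δ) {n k : ℕ} (hk : k ≤ (1 / 2 - δ) * n) :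
    ∑ i ∈ Iic k, (n.choose i : ℝ) ≤ 2 ^ n * Real.exp (-(2 * δ ^ 2) * n) := by
  have chernoff : (∑ i ∈ Iic k, (n.choose i : ℝ)) * Real.exp (-(4 * δ)) ^ k ≤
      (2 * Real.exp (2 * δ ^ 2 - 2 * δ)) ^ n :=
    (sum_choose_mul_pow_le (Real.exp_pos _).le (Real.exp_le_one_iff.2 (by linarith)) n k).trans
      (by gcongr; exact one_add_exp_neg_le δ)
  rw [mul_pow, ← Real.exp_nat_mul, ← Real.exp_nat_mul,
    ← le_div_iff₀ (Real.exp_pos _), mul_div_assoc, ← Real.exp_sub] at chernoff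
  refine chernoff.trans ?_
  gcongr
  nlinarith

lemma card_le_sum_choose_of_forall_shatters_card_le {α : Type*} [DecidableEq α] [Fintype α]
    {𝒜 : Finset (Finset α)} {k : ℕ} (h : ∀ s, 𝒜.Shatters s → #s ≤ k) :
    #𝒜 ≤ ∑ i ∈ Iic k, (Fintype.card α).choose i :=
  calc #𝒜 ≤ #𝒜.shatterer := 𝒜.card_le_card_shatterer
    _ ≤ ∑ i ∈ Iic 𝒜.vcDim, (Fintype.card α).choose i := card_shatterer_le_sum_vcDim
    _ ≤ ∑ i ∈ Iic k, (Fintype.card α).choose i :=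
        sum_le_sum_of_subset (Iic_subset_Iic.2 (Finset.sup_le fun s hs => h s (mem_shatterer.1 hs)))

lemma sum_exp_neg_mul_le_geometric {c : ℝ} (hc : 0 < c) {a : ℕ} {m : ℕ → ℕ} {d : ℕ}
    (hm : ∀ i < d, a + i ≤ m i) :
    ∑ i ∈ range d, Real.exp (-c * m i) ≤ (1 - Real.exp (-c))⁻¹ * Real.exp (-c * a) := by
  have ratio_nonneg : 0 ≤ Real.exp (-c) := (Real.exp_pos _).le
  have ratio_lt_one : Real.exp (-c) < 1 := Real.exp_lt_one_iff.2 (by linarith)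
  calc ∑ i ∈ range d, Real.exp (-c * m i)
      ≤ ∑ i ∈ range d, Real.exp (-c) ^ i * Real.exp (-c * a) := by
        refine sum_le_sum fun i hi => ?_
        rw [← Real.exp_nat_mul, ← Real.exp_add, Real.exp_le_exp]
        have : (a : ℝ) + i ≤ m i := mod_cast hm i (mem_range.1 hi)
        nlinarith
    _ ≤ (1 - Real.exp (-c))⁻¹ * Real.exp (-c * a) := by
        rw [← sum_mul, ← tsum_geometric_of_lt_one ratio_nonneg ratio_lt_one]
        gcongr
        exact (summable_geometric_of_lt_one ratio_nonneg ratio_lt_one).sum_le_tsum _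
          fun _ _ => by positivity

end CombinatorialBounds

section Measure

lemma measure_pi_le_of_forall_update {ι : Type*} [Fintype ι] [DecidableEq ι] {X : ι → Type*}
    [∀ i, MeasurableSpace (X i)] (μ : ∀ i, Measure (X i)) [∀ i, IsProbabilityMeasure (μ i)]
    {E : Set (∀ i, X i)} (hE : MeasurableSet E) (i : ι) {p : ENNReal}
    (h : ∀ x, μ i {m | Function.update x i m ∈ E} ≤ p) : Measure.pi μ E ≤ p := by
  obtain ⟨x⟩ := nonempty_of_isProbabilityMeasure (Measure.pi μ)
  have fibre_le (y : ∀ i, X i) :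
      ∫⁻ m, E.indicator (1 : (∀ i, X i) → ENNReal) (Function.update y i m) ∂μ i ≤ p :=
    (lintegral_indicator_one (measurable_update y hE)).le.trans (h y)
  rw [← lintegral_indicator_one hE, lintegral_eq_lmarginal_univ x,
    lmarginal_erase' _ (measurable_one.indicator hE) (mem_univ i)]
  calc _ ≤ (∫⋯∫⁻_univ.erase i, (fun _ => p) ∂μ) x := lmarginal_mono fibre_le x
    _ = p := by simp [lmarginal]

lemma measure_pi_submodule_eq_zero {κ : Type*} [Fintype κ] (μ : κ → Measure ℝ)
    [∀ j, IsProbabilityMeasure (μ j)] [∀ j, NullSingletonClass (μ j)] {p : Submodule ℝ (κ → ℝ)}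
    (hp : p ≠ ⊤) : Measure.pi μ (p : Set (κ → ℝ)) = 0 := by
  classical
  obtain ⟨j, hj⟩ : ∃ j, Pi.single j (1 : ℝ) ∉ p := by
    by_contra! h
    refine hp (eq_top_iff.2 fun x _ => ?_)
    rw [pi_eq_sum_univ' x]
    exact p.sum_mem fun j _ => p.smul_mem _ (by simpa [← Pi.single_apply] using h j)
  refine nonpos_iff_eq_zero.1 (measure_pi_le_of_forall_update μ
    p.closed_of_finiteDimensional.measurableSet j fun x => ?_)
  refine (Set.Subsingleton.measure_zero (fun a ha b hb => ?_) _).le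
  by_contra hab
  have hsub : (a - b) • Pi.single j (1 : ℝ) ∈ p := by
    convert p.sub_mem ha hb using 1
    ext l
    rcases eq_or_ne l j with rfl | hl <;> simp [*]
  exact hj ((p.smul_mem_iff (sub_ne_zero.2 hab)).1 hsub)

/-- Double counting: the pairs `(a, x)` with `f a x ∈ B` have total mass `card α * μ B`. -/
lemma card_mul_measure_le_of_ae_card_le {α Ω : Type*} [Fintype α] [MeasurableSpace Ω]
    {μ : Measure Ω} [IsProbabilityMeasure μ] {f : α → Ω → Ω}
    (hf : ∀ a, MeasurePreserving (f a) μ μ) {B : Set Ω} (hB : MeasurableSet B)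
    [∀ x, DecidablePred fun a => f a x ∈ B] {N : ℕ} (hN : ∀ᵐ x ∂μ, #{a | f a x ∈ B} ≤ N) :
    Fintype.card α * μ B ≤ N := by
  have indicator_meas : Measurable (B.indicator (1 : Ω → ENNReal)) := measurable_one.indicator hB
  have lintegral_eq (a : α) : ∫⁻ x, B.indicator 1 (f a x) ∂μ = μ B := by
    rw [(hf a).lintegral_comp indicator_meas, lintegral_indicator_one hB]
  calc Fintype.card α * μ B = ∑ a, ∫⁻ x, B.indicator 1 (f a x) ∂μ := by simp [lintegral_eq]
    _ = ∫⁻ x, ∑ a, B.indicator 1 (f a x) ∂μ :=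
        (lintegral_finsetSum _ fun a _ => indicator_meas.comp (hf a).measurable).symm
    _ ≤ ∫⁻ _, N ∂μ := by
        refine lintegral_mono_ae (hN.mono fun x hx => ?_)
        simp only [Set.indicator_apply, Pi.one_apply, sum_boole]
        exact_mod_cast hx
    _ = N := by simp

lemma measurePreserving_piecewise_neg {ι : Type*} [Fintype ι] [DecidableEq ι] {X : ι → Type*}
    [∀ i, AddGroup (X i)] [∀ i, MeasurableSpace (X i)] [∀ i, MeasurableNeg (X i)]
    (μ : ∀ i, Measure (X i)) [∀ i, SigmaFinite (μ i)] [∀ i, (μ i).IsNegInvariant] (A : Finset ι) :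
    MeasurePreserving (fun x => A.piecewise (-x) x) (Measure.pi μ) (Measure.pi μ) := by
  refine measurePreserving_pi μ μ (f := fun i v => if i ∈ A then -v else v) fun i => ?_
  by_cases hi : i ∈ A
  · simpa only [hi, if_true] using Measure.measurePreserving_neg (μ i)
  · simp only [hi, if_false]
    exact MeasurePreserving.id (μ i)

lemma measurableSet_image_of_isOpen_inter_isClosed {X Y : Type*} [PseudoEMetricSpace X]
    [SigmaCompactSpace X] [TopologicalSpace Y] [T2Space Y] [MeasurableSpace Y]
    [OpensMeasurableSpace Y] {f : X → Y} (hf : Continuous f) {U F : Set X} (hU : IsOpen U)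
    (hF : IsClosed F) : MeasurableSet (f '' (U ∩ F)) := by
  obtain ⟨V, V_closed, -, rfl, -⟩ := hU.exists_iUnion_isClosed
  have sigmaCompact (m : ℕ) : IsSigmaCompact (V m ∩ F) :=
    isSigmaCompact_univ.of_isClosed_subset ((V_closed m).inter hF) (Set.subset_univ _)
  rw [Set.iUnion_inter]
  obtain ⟨K, K_compact, hK⟩ := (isSigmaCompact_iUnion _ sigmaCompact).image hf
  rw [← hK]
  exact .iUnion fun m => (K_compact m).isClosed.measurableSet

instance gaussianReal_isNegInvariant (v : NNReal) : (gaussianReal 0 v).IsNegInvariant :=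
  ⟨gaussianReal_map_neg.trans (by rw [neg_zero])⟩

end Measure

section GeneralPosition

variable {ι E : Type*} [AddCommGroup E] [Module ℝ E]

/-- Linear general position: any subfamily with at most `finrank` members is linearly independent.
It is the almost sure property of the rows of a random matrix on which recovery rests. -/
def InGeneralPosition (v : ι → E) : Prop :=
  ∀ s : Finset ι, #s ≤ finrank ℝ E → LinearIndepOn ℝ v s

namespace InGeneralPosition

variable [FiniteDimensional ℝ E] {v : ι → E}

lemma eq_zero_of_forall_map_eq_zero (hv : InGeneralPosition v) {S : Finset ι}
    (hS : finrank ℝ E ≤ #S) {F : Type*} [AddCommGroup F] [Module ℝ F] {f : E →ₗ[ℝ] F}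
    (hf : ∀ i ∈ S, f (v i) = 0) : f = 0 := by
  obtain ⟨B, hBS, hB⟩ := exists_subset_card_eq hS
  have span_eq_top := (hv B hB.le).linearIndependent.span_eq_top_of_card_eq_finrank' (by simpa)
  refine LinearMap.ext_on_range span_eq_top fun i => ?_
  exact hf i (hBS i.2)

lemma exists_sum_smul_eq_zero (hv : InGeneralPosition v) {T : Finset ι}
    (hT : finrank ℝ E < #T) :
    ∃ a : ι → ℝ, ∑ i ∈ T, a i • v i = 0 ∧ finrank ℝ E < #{i ∈ T | a i ≠ 0} := by
  have dependent : ¬ LinearIndepOn ℝ v T := fun h =>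
    hT.not_ge (by simpa using h.linearIndependent.fintype_card_le_finrank)
  simp only [linearIndepOn_finset_iff, not_forall] at dependent
  obtain ⟨a, ha, i, hi, hai⟩ := dependent
  refine ⟨a, ha, ?_⟩
  by_contra! hcard
  rw [← sum_filter_of_ne (p := fun i => a i ≠ 0) fun j _ => left_ne_zero_of_smul] at ha
  exact hai (linearIndepOn_finset_iff.1 (hv _ hcard) a ha i (mem_filter.2 ⟨hi, hai⟩))

/-- The pattern is given by the signs of the coefficients of a linear relation on `T`. -/
lemma exists_sign_pattern_forall_eq_zero (hv : InGeneralPosition v) {T : Finset ι}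
    (hT : finrank ℝ E < #T) :
    ∃ s ⊆ T, ∀ f : E →ₗ[ℝ] ℝ, (∀ i ∈ s, 0 ≤ f (v i)) → (∀ i ∈ T, i ∉ s → f (v i) ≤ 0) →
      f = 0 := by
  obtain ⟨a, ha, hcard⟩ := hv.exists_sum_smul_eq_zero hT
  refine ⟨{i ∈ T | 0 < a i}, filter_subset _ _, fun f hpos hneg => ?_⟩
  have mul_nonneg_of_mem : ∀ i ∈ T, 0 ≤ a i * f (v i) := fun i hi => by
    rcases lt_or_ge 0 (a i) with hai | hai
    · exact mul_nonneg hai.le (hpos i (by simp [hi, hai]))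
    · exact mul_nonneg_of_nonpos_of_nonpos hai (hneg i hi (by simp [hai]))
  have sum_eq_zero : ∑ i ∈ T, a i * f (v i) = 0 := by
    simpa using congrArg f ha
  refine hv.eq_zero_of_forall_map_eq_zero hcard.le fun i hi => ?_
  obtain ⟨hiT, hai⟩ := mem_filter.1 hi
  have term_eq_zero := (sum_eq_zero_iff_of_nonneg mul_nonneg_of_mem).1 sum_eq_zero i hiT
  exact (mul_eq_zero.1 term_eq_zero).resolve_left hai

end InGeneralPosition

end GeneralPosition

section RandomGeneralPosition

variable {ι E : Type*} [NormedAddCommGroup E] [NormedSpace ℝ E] [FiniteDimensional ℝ E]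
  [MeasurableSpace E] [BorelSpace E]

lemma measurableSet_linearIndepOn [Countable ι] (s : Finset ι) :
    MeasurableSet {v : ι → E | LinearIndepOn ℝ v s} := by
  have restrict_continuous : Continuous fun (v : ι → E) (i : (s : Set ι)) => v i := by fun_prop
  exact (isOpen_setOfPred_linearIndependent.preimage restrict_continuous).measurableSet

variable [Fintype ι] (μ : ι → Measure E) [∀ i, IsProbabilityMeasure (μ i)]

lemma ae_linearIndepOn_insert (hμ : ∀ i, ∀ p : Submodule ℝ E, p ≠ ⊤ → μ i (p : Set E) = 0)
    [DecidableEq ι] {s : Finset ι} (hs : #s < finrank ℝ E) {i : ι} (hi : i ∉ s) :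
    ∀ᵐ v ∂Measure.pi μ, LinearIndepOn ℝ v s → LinearIndepOn ℝ v (insert i s : Finset ι) := by
  have meas := (measurableSet_linearIndepOn (E := E) s).diff
    (measurableSet_linearIndepOn (insert i s))
  suffices Measure.pi μ ({v | LinearIndepOn ℝ v s} \
      {v | LinearIndepOn ℝ v (insert i s : Finset ι)}) = 0 from
    measure_mono_null (by intro v; simp) this
  refine nonpos_iff_eq_zero.1 (measure_pi_le_of_forall_update μ meas i fun v => ?_)
  have span_ne_top : Submodule.span ℝ (v '' s) ≠ ⊤ := by
    rw [Set.image_eq_range]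
    exact fun h => hs.not_ge (by simpa using finrank_le_of_span_eq_top h)
  refine (measure_mono_null (fun m hm => ?_) (hμ i _ span_ne_top)).le
  by_contra hspan
  refine hm.2 ?_
  have image_update : Function.update v i m '' s = v '' s :=
    Set.image_congr fun j hj => Function.update_of_ne (ne_of_mem_of_not_mem hj hi) _ _
  simp only [Set.mem_ofPred_eq, coe_insert]
  exact hm.1.insert (by simpa [image_update] using hspan)

lemma ae_linearIndepOn_of_card_le_finrank
    (hμ : ∀ i, ∀ p : Submodule ℝ E, p ≠ ⊤ → μ i (p : Set E) = 0) (s : Finset ι)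
    (hs : #s ≤ finrank ℝ E) : ∀ᵐ v ∂Measure.pi μ, LinearIndepOn ℝ v s := by
  classical
  induction s using Finset.induction_on with
  | empty => simp
  | insert i s hi ih =>
    rw [card_insert_of_notMem hi] at hs
    filter_upwards [ih (by omega), ae_linearIndepOn_insert μ hμ hs hi] with v hv hinsert
    exact hinsert hv

lemma ae_inGeneralPosition (hμ : ∀ i, ∀ p : Submodule ℝ E, p ≠ ⊤ → μ i (p : Set E) = 0) :
    ∀ᵐ v ∂Measure.pi μ, InGeneralPosition v :=
  ae_all_iff.2 fun s => Filter.eventually_imp_distrib_left.2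
    (ae_linearIndepOn_of_card_le_finrank μ hμ s)

end RandomGeneralPosition

section Layer

lemma relu_eq_relu_zero_iff {a : ℝ} : relu a = relu 0 ↔ a ≤ 0 := by
  simp [relu]

lemma eq_of_relu_eq_relu_of_pos {a b : ℝ} (hb : 0 < b) (h : relu a = relu b) : a = b := by
  simp only [relu, max_eq_left hb.le] at h
  rcases max_choice a 0 with ha | ha <;> linarith

lemma continuous_relu : Continuous relu :=
  continuous_id.max continuous_const

variable {ι κ : Type*} [Fintype κ]

/-- The ReLU layer with rows `M` is injective at the activation `y`: no other input has the same
output as `y`. If this holds at every layer, the input of the network can be recovered layer by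
layer. -/
def RecoverableAt (M : ι → κ → ℝ) (y : κ → ℝ) : Prop :=
  ∀ z : κ → ℝ, (∀ j, relu ((Matrix.of M).mulVec z j) = relu ((Matrix.of M).mulVec y j)) → z = y

lemma measurableSet_recoverableAt [Finite ι] :
    MeasurableSet {p : (ι → κ → ℝ) × (κ → ℝ) | RecoverableAt p.1 p.2} := by
  have := Fintype.ofFinite ι
  let U : Set (((ι → κ → ℝ) × (κ → ℝ)) × (κ → ℝ)) := {q | q.2 ≠ q.1.2}
  let F : Set (((ι → κ → ℝ) × (κ → ℝ)) × (κ → ℝ)) := {q | ∀ j,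
    relu ((Matrix.of q.1.1).mulVec q.2 j) = relu ((Matrix.of q.1.1).mulVec q.1.2 j)}
  have U_open : IsOpen U := isOpen_ne_fun (by fun_prop) (by fun_prop)
  have F_closed : IsClosed F := by
    simp only [F, Set.ofPred_forall, Matrix.mulVec, dotProduct, Matrix.of_apply]
    exact isClosed_iInter fun j =>
      isClosed_eq (continuous_relu.comp (by fun_prop)) (continuous_relu.comp (by fun_prop))
  have compl_eq : {p : (ι → κ → ℝ) × (κ → ℝ) | RecoverableAt p.1 p.2}ᶜ = Prod.fst '' (U ∩ F) := by
    ext p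
    simp [RecoverableAt, U, F, and_comm]
  rw [← MeasurableSet.compl_iff, compl_eq]
  exact measurableSet_image_of_isOpen_inter_isClosed continuous_fst U_open F_closed

variable [DecidableEq ι]

lemma mulVec_piecewise_neg (A : Finset ι) (M : ι → κ → ℝ) (z : κ → ℝ) (j : ι) :
    (Matrix.of (A.piecewise (-M) M)).mulVec z j =
      if j ∈ A then -(M j ⬝ᵥ z) else M j ⬝ᵥ z := by
  by_cases hj : j ∈ A
  · simp only [Matrix.mulVec, Matrix.of_apply, piecewise_eq_of_mem _ _ _ hj, if_pos hj]
    exact neg_dotProduct (M j) z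
  · simp [Matrix.mulVec, hj]

lemma exists_pattern_recoverableAt_zero {M : ι → κ → ℝ} (hM : InGeneralPosition M)
    {T : Finset ι} (hT : Fintype.card κ < #T) :
    ∃ s ⊆ T, ∀ A, T ∩ A = s → RecoverableAt (A.piecewise (-M) M) 0 := by
  obtain ⟨s, hsT, hs⟩ := hM.exists_sign_pattern_forall_eq_zero (T := T) (by simpa using hT)
  refine ⟨s, hsT, fun A hA z hz => ?_⟩
  simp only [mulVec_piecewise_neg, dotProduct_zero, neg_zero, ite_self,
    relu_eq_relu_zero_iff] at hz
  have dotProduct_z_eq_zero : (dotProductBilin ℝ ℝ).flip z = 0 := by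
    refine hs _ (fun j hj => ?_) fun j hjT hj => ?_
    · have hjA : j ∈ A := (mem_inter.1 (hA ▸ hj)).2
      simpa [hjA] using hz j
    · have hjA : j ∉ A := fun hjA => hj (hA ▸ mem_inter.2 ⟨hjT, hjA⟩)
      simpa [hjA] using hz j
  exact dotProduct_self_eq_zero.1 (LinearMap.congr_fun dotProduct_z_eq_zero z)

lemma exists_pattern_recoverableAt_of_forall_dotProduct_ne_zero {M : ι → κ → ℝ}
    (hM : InGeneralPosition M) {y : κ → ℝ} (hy : ∀ j, M j ⬝ᵥ y ≠ 0) {T : Finset ι}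
    (hT : Fintype.card κ ≤ #T) :
    ∃ s ⊆ T, ∀ A, T ∩ A = s → RecoverableAt (A.piecewise (-M) M) y := by
  refine ⟨{j ∈ T | M j ⬝ᵥ y < 0}, filter_subset _ _, fun A hA z hz => ?_⟩
  have dotProduct_eq : ∀ j ∈ T, M j ⬝ᵥ z = M j ⬝ᵥ y := fun j hj => by
    have mem_iff : j ∈ A ↔ M j ⬝ᵥ y < 0 := by simpa [hj] using Finset.ext_iff.1 hA j
    have relu_eq := hz j
    simp only [mulVec_piecewise_neg] at relu_eq
    rcases (hy j).lt_or_gt with hneg | hpos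
    · simp only [mem_iff.2 hneg, if_true] at relu_eq
      exact neg_injective (eq_of_relu_eq_relu_of_pos (neg_pos.2 hneg) relu_eq)
    · simp only [mt mem_iff.1 hpos.not_gt, if_false] at relu_eq
      exact eq_of_relu_eq_relu_of_pos hpos relu_eq
  have dotProduct_sub_eq_zero : (dotProductBilin ℝ ℝ).flip (z - y) = 0 :=
    hM.eq_zero_of_forall_map_eq_zero (S := T) (by simpa using hT) fun j hj => by
      simp [dotProduct_eq j hj]
  exact sub_eq_zero.1
    (dotProduct_self_eq_zero.1 (LinearMap.congr_fun dotProduct_sub_eq_zero (z - y)))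

open Classical in
lemma card_not_recoverableAt_piecewise_neg_le [Fintype ι] {M : ι → κ → ℝ}
    (hM : InGeneralPosition M) {y : κ → ℝ} (hy : y ≠ 0 → ∀ j, M j ⬝ᵥ y ≠ 0) :
    #{A : Finset ι | ¬ RecoverableAt (A.piecewise (-M) M) y} ≤
      ∑ i ∈ Iic (Fintype.card κ), (Fintype.card ι).choose i := by
  refine card_le_sum_choose_of_forall_shatters_card_le fun T hT => ?_
  by_contra! hcard
  obtain ⟨s, hsT, hs⟩ : ∃ s ⊆ T, ∀ A, T ∩ A = s → RecoverableAt (A.piecewise (-M) M) y := by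
    rcases eq_or_ne y 0 with rfl | hy₀
    · exact exists_pattern_recoverableAt_zero hM hcard
    · exact exists_pattern_recoverableAt_of_forall_dotProduct_ne_zero hM (hy hy₀) hcard.le
  obtain ⟨A, hA, hAs⟩ := hT hsT
  exact (mem_filter.1 hA).2 (hs A hAs)

end Layer

section RandomLayer

variable {ι κ : Type*} [Fintype ι] [Fintype κ] (μ : ι → Measure (κ → ℝ))
  [∀ j, IsProbabilityMeasure (μ j)]

lemma ae_forall_dotProduct_ne_zero
    (hμ : ∀ j, ∀ p : Submodule ℝ (κ → ℝ), p ≠ ⊤ → μ j (p : Set (κ → ℝ)) = 0) {y : κ → ℝ}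
    (hy : y ≠ 0) : ∀ᵐ M ∂Measure.pi μ, ∀ j, M j ⬝ᵥ y ≠ 0 := by
  have ker_ne_top : LinearMap.ker ((dotProductBilin ℝ ℝ).flip y) ≠ ⊤ := fun h =>
    hy (dotProduct_self_eq_zero.1 (LinearMap.congr_fun (LinearMap.ker_eq_top.1 h) y))
  refine ae_all_iff.2 fun j => ?_
  exact (Measure.quasiMeasurePreserving_eval μ j).ae (p := fun v => v ⬝ᵥ y ≠ 0)
    (measure_mono_null (fun v hv => by simpa using hv) (hμ j _ ker_ne_top))

lemma measure_not_recoverableAt_le [∀ j, (μ j).IsNegInvariant]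
    (hμ : ∀ j, ∀ p : Submodule ℝ (κ → ℝ), p ≠ ⊤ → μ j (p : Set (κ → ℝ)) = 0) (y : κ → ℝ) :
    2 ^ Fintype.card ι * Measure.pi μ {M | ¬ RecoverableAt M y} ≤
      (∑ i ∈ Iic (Fintype.card κ), (Fintype.card ι).choose i : ℕ) := by
  classical
  have meas : MeasurableSet {M : ι → κ → ℝ | ¬ RecoverableAt M y} :=
    (measurable_id.prodMk measurable_const measurableSet_recoverableAt).compl
  have ae_dotProduct : ∀ᵐ M ∂Measure.pi μ, y ≠ 0 → ∀ j, M j ⬝ᵥ y ≠ 0 :=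
    Filter.eventually_imp_distrib_left.2 (ae_forall_dotProduct_ne_zero μ hμ)
  have ae_card_le : ∀ᵐ M ∂Measure.pi μ,
      #{A : Finset ι | A.piecewise (-M) M ∈ {M | ¬ RecoverableAt M y}} ≤
        ∑ i ∈ Iic (Fintype.card κ), (Fintype.card ι).choose i := by
    filter_upwards [ae_inGeneralPosition μ hμ, ae_dotProduct] with M hM hMy
    exact card_not_recoverableAt_piecewise_neg_le hM hMy
  simpa using card_mul_measure_le_of_ae_card_le (measurePreserving_piecewise_neg μ) meas ae_card_le

lemma measure_not_recoverableAt_le_exp [∀ j, (μ j).IsNegInvariant]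
    (hμ : ∀ j, ∀ p : Submodule ℝ (κ → ℝ), p ≠ ⊤ → μ j (p : Set (κ → ℝ)) = 0) {δ : ℝ}
    (hδ : 0 ≤ δ) (hκ : Fintype.card κ ≤ (1 / 2 - δ) * Fintype.card ι) (y : κ → ℝ) :
    Measure.pi μ {M | ¬ RecoverableAt M y} ≤
      ENNReal.ofReal (Real.exp (-(2 * δ ^ 2) * Fintype.card ι)) := by
  have two_pow_eq : (2 : ENNReal) ^ Fintype.card ι = ENNReal.ofReal (2 ^ Fintype.card ι) := by
    rw [ENNReal.ofReal_pow zero_le_two, ENNReal.ofReal_ofNat]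
  rw [← ENNReal.mul_le_mul_iff_right (a := 2 ^ Fintype.card ι) (by simp) (by finiteness)]
  refine (measure_not_recoverableAt_le μ hμ y).trans ?_
  rw [two_pow_eq, ← ENNReal.ofReal_mul (by positivity), ← ENNReal.ofReal_natCast]
  gcongr
  exact_mod_cast sum_choose_le_two_pow_mul_exp hδ hκ

end RandomLayer

section Network

variable {n : ℕ → ℕ}

lemma eq_of_layerOut_eq_of_forall_recoverableAt {W : ∀ i, Fin (n (i + 1)) → Fin (n i) → ℝ}
    {d : ℕ} {z₀ : Fin (n 0) → ℝ} (hW : ∀ i < d, RecoverableAt (W i) (layerOut n W i z₀))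
    {z : Fin (n 0) → ℝ} (hz : layerOut n W d z = layerOut n W d z₀) : z = z₀ := by
  induction d with
  | zero => exact hz
  | succ d ih =>
    exact ih (fun i hi => hW i (by omega)) (hW d (by omega) _ fun j => congrFun hz j)

lemma layerOut_congr {W V : ∀ i, Fin (n (i + 1)) → Fin (n i) → ℝ} {j : ℕ}
    (h : ∀ l < j, W l = V l) (z : Fin (n 0) → ℝ) : layerOut n W j z = layerOut n V j z := by
  induction j with
  | zero => rfl
  | succ j ih =>
    simp only [layerOut, ih fun l hl => h l (by omega), h j (by omega)]

lemma continuous_layerOut (j : ℕ) (z : Fin (n 0) → ℝ) :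
    Continuous fun W : ∀ i, Fin (n (i + 1)) → Fin (n i) → ℝ => layerOut n W j z := by
  induction j with
  | zero => exact continuous_const
  | succ j ih =>
    simp only [layerOut, Matrix.mulVec, dotProduct, Matrix.of_apply]
    exact continuous_pi fun i => continuous_relu.comp (by fun_prop)

variable {d : ℕ}

lemma continuous_extendW : Continuous (extendW d n) := by
  refine continuous_pi fun i => ?_
  by_cases hi : i < d
  · simpa only [extendW, hi, dif_pos] using continuous_apply (⟨i, hi⟩ : Fin d)
  · simpa only [extendW, hi, dif_neg, not_false_iff] using continuous_const

lemma extendW_update_self (W : ∀ i : Fin d, Fin (n (i.1 + 1)) → Fin (n i.1) → ℝ) (i : Fin d)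
    (M : Fin (n (i.1 + 1)) → Fin (n i.1) → ℝ) :
    extendW d n (Function.update W i M) i = M := by
  simp [extendW]

lemma layerOut_extendW_update (W : ∀ i : Fin d, Fin (n (i.1 + 1)) → Fin (n i.1) → ℝ) (i : Fin d)
    (M : Fin (n (i.1 + 1)) → Fin (n i.1) → ℝ) (z : Fin (n 0) → ℝ) :
    layerOut n (extendW d n (Function.update W i M)) i z = layerOut n (extendW d n W) i z := by
  refine layerOut_congr (fun l hl => ?_) z
  have hne : (⟨l, hl.trans i.2⟩ : Fin d) ≠ i := Fin.ne_of_lt hl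
  simp [extendW, hl.trans i.2, Function.update_of_ne hne]

lemma add_le_size_of_two_mul_le (h₀ : 0 < n 0) (hn : ∀ i < d, 2 * n i ≤ n (i + 1)) :
    ∀ i ≤ d, n 0 + i ≤ n i := by
  intro i hi
  induction i with
  | zero => rfl
  | succ i ih =>
    have := ih (by omega)
    have := hn i (by omega)
    omega

variable (μ : ∀ i : Fin d, Measure (Fin (n (i.1 + 1)) → Fin (n i.1) → ℝ))
  [∀ i, IsProbabilityMeasure (μ i)]

lemma measure_not_recoverableAt_layerOut_le (z₀ : Fin (n 0) → ℝ) (i : Fin d) {p : ENNReal}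
    (h : ∀ y, μ i {M | ¬ RecoverableAt M y} ≤ p) :
    Measure.pi μ {W | ¬ RecoverableAt (extendW d n W i) (layerOut n (extendW d n W) i z₀)} ≤ p := by
  have weight_and_activation_meas :
      Measurable fun W => (extendW d n W i, layerOut n (extendW d n W) i z₀) :=
    (((continuous_apply (i : ℕ)).comp continuous_extendW).prodMk
      ((continuous_layerOut i z₀).comp continuous_extendW)).measurable
  refine measure_pi_le_of_forall_update μ
    (weight_and_activation_meas measurableSet_recoverableAt).compl i fun W => ?_
  simpa only [Set.mem_compl_iff, Set.mem_preimage, Set.mem_ofPred_eq, extendW_update_self,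
    layerOut_extendW_update] using h (layerOut n (extendW d n W) i z₀)

lemma one_sub_sum_le_measure_recoverable (z₀ : Fin (n 0) → ℝ) {p : ℕ → ENNReal}
    (h : ∀ (i : Fin d) y, μ i {M | ¬ RecoverableAt M y} ≤ p i) :
    1 - ∑ i ∈ range d, p i ≤ Measure.pi μ
      {W | (∀ z, layerOut n (extendW d n W) d z = layerOut n (extendW d n W) d z₀ → z = z₀) ∧
        ∀ i < d, RecoverableAt (extendW d n W i) (layerOut n (extendW d n W) i z₀)} := by
  set good := {W : ∀ i : Fin d, Fin (n (i.1 + 1)) → Fin (n i.1) → ℝ |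
    (∀ z, layerOut n (extendW d n W) d z = layerOut n (extendW d n W) d z₀ → z = z₀) ∧
      ∀ i < d, RecoverableAt (extendW d n W i) (layerOut n (extendW d n W) i z₀)}
  have compl_subset : goodᶜ ⊆ ⋃ i : Fin d,
      {W | ¬ RecoverableAt (extendW d n W i) (layerOut n (extendW d n W) i z₀)} := by
    intro W hW
    by_contra hgood
    simp only [Set.mem_iUnion, Set.mem_ofPred_eq, not_exists, not_not] at hgood
    have recoverable : ∀ i < d, RecoverableAt (extendW d n W i) (layerOut n (extendW d n W) i z₀) :=
      fun i hi => hgood ⟨i, hi⟩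
    exact hW ⟨fun z => eq_of_layerOut_eq_of_forall_recoverableAt recoverable, recoverable⟩
  have measure_compl_le : Measure.pi μ goodᶜ ≤ ∑ i ∈ range d, p i :=
    calc Measure.pi μ goodᶜ
        ≤ ∑ i : Fin d, Measure.pi μ
            {W | ¬ RecoverableAt (extendW d n W i) (layerOut n (extendW d n W) i z₀)} :=
          (measure_mono compl_subset).trans (measure_iUnion_fintype_le _ _)
      _ ≤ ∑ i : Fin d, p i :=
          sum_le_sum fun i _ => measure_not_recoverableAt_layerOut_le μ z₀ i (h i)
      _ = ∑ i ∈ range d, p i := Fin.sum_univ_eq_sum_range p d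
  rw [tsub_le_iff_right]
  calc 1 = Measure.pi μ Set.univ := measure_univ.symm
    _ ≤ Measure.pi μ good + Measure.pi μ goodᶜ := measure_univ_le_add_compl good
    _ ≤ Measure.pi μ good + ∑ i ∈ range d, p i := by gcongr

end Network

theorem exact_recovery_expansive_random_relu_network_general {δ : ℝ} (hδ : 0 < δ) {d : ℕ}
    {n : ℕ → ℕ} (h₀ : 0 < n 0) (hn : ∀ i < d, (n i : ℝ) ≤ (1 / 2 - δ) * n (i + 1))
    (μ : ∀ i : Fin d, Fin (n (i.1 + 1)) → Measure (Fin (n i.1) → ℝ))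
    [∀ i j, IsProbabilityMeasure (μ i j)] [∀ i j, (μ i j).IsNegInvariant]
    (hμ : ∀ i j, ∀ p : Submodule ℝ (Fin (n i.1) → ℝ), p ≠ ⊤ → μ i j (p : Set _) = 0)
    (zstar : Fin (n 0) → ℝ) :
    1 - ENNReal.ofReal ((1 - Real.exp (-(2 * δ ^ 2)))⁻¹ * Real.exp (-(2 * δ ^ 2) * n 0)) ≤
      Measure.pi (fun i => Measure.pi (μ i))
        {W | (∀ z, layerOut n (extendW d n W) d z = layerOut n (extendW d n W) d zstar →
                z = zstar) ∧
          ∀ i < d, RecoverableAt (extendW d n W i) (layerOut n (extendW d n W) i zstar)} := by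
  have two_mul_le : ∀ i < d, 2 * n i ≤ n (i + 1) := fun i hi => by
    have : 2 * (n i : ℝ) ≤ n (i + 1) := by
      nlinarith [hn i hi, (n (i + 1)).cast_nonneg (α := ℝ)]
    exact_mod_cast this
  have growth : ∀ i < d, n 0 + i ≤ n (i + 1) := fun i hi =>
    (add_le_size_of_two_mul_le h₀ two_mul_le (i + 1) hi).trans' (by omega)
  have layer_bound (i : Fin d) (y : Fin (n i) → ℝ) :
      Measure.pi (μ i) {M | ¬ RecoverableAt M y} ≤
        ENNReal.ofReal (Real.exp (-(2 * δ ^ 2) * n (i + 1))) := by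
    simpa using measure_not_recoverableAt_le_exp (μ i) (hμ i) hδ.le (by simpa using hn i i.2) y
  refine (tsub_le_tsub_left ?_ 1).trans
    (one_sub_sum_le_measure_recoverable _ zstar
      (p := fun i => .ofReal (Real.exp (-(2 * δ ^ 2) * n (i + 1)))) layer_bound)
  rw [← ENNReal.ofReal_sum_of_nonneg fun i _ => (Real.exp_pos _).le]
  exact ENNReal.ofReal_le_ofReal (sum_exp_neg_mul_le_geometric (by positivity) growth)

/-- **Exact recovery for expansive random ReLU networks.**
There are absolute constants `c, C > 0` such that: for any depth `d ≥ 1`, layer sizes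
`n₀ = k, n₁, …, n_d` with `n_i ≥ (21/10)·n_{i−1}`, independent i.i.d. standard Gaussian
weight matrices `W_i ∈ ℝ^{n_i × n_{i−1}}`, and any fixed `z* ∈ ℝ^k`, with probability at
least `1 − C·exp(−c·k)` the network `G(z) = ReLU(W_d ⋯ ReLU(W₁ z) ⋯)` satisfies
`G(z) = G(z*) → z = z*`, and every intermediate layer map is injective at the
corresponding intermediate activation. -/
theorem exact_recovery_expansive_random_relu_network :
    ∃ c C : ℝ, 0 < c ∧ 0 < C ∧
      ∀ (d : ℕ), 1 ≤ d → ∀ (n : ℕ → ℕ) (k : ℕ), n 0 = k → 0 < k →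
        (∀ i < d, 21 * n i ≤ 10 * n (i + 1)) →
        ∀ zstar : Fin (n 0) → ℝ,
          1 - ENNReal.ofReal (C * Real.exp (-c * (k : ℝ))) ≤
            netGaussian d n
              {W' | (∀ z : Fin (n 0) → ℝ,
                        layerOut n (extendW d n W') d z = layerOut n (extendW d n W') d zstar →
                          z = zstar) ∧
                    (∀ i < d, ∀ y : Fin (n i) → ℝ,
                      (∀ j, relu ((Matrix.of (extendW d n W' i)).mulVec y j) =
                            relu ((Matrix.of (extendW d n W' i)).mulVec
                              (layerOut n (extendW d n W') i zstar) j)) →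
                        y = layerOut n (extendW d n W') i zstar)} := by
  refine ⟨2 * (1 / 42) ^ 2, (1 - Real.exp (-(2 * (1 / 42) ^ 2)))⁻¹, by positivity,
    inv_pos.2 (sub_pos.2 (Real.exp_lt_one_iff.2 (by norm_num))), ?_⟩
  have := nullSingletonClass_gaussianReal (μ := 0) (v := 1) one_ne_zero
  rintro d - n _ rfl h₀ hn zstar
  refine exact_recovery_expansive_random_relu_network_general (by norm_num) h₀ (fun i hi => ?_)
    (fun _ _ => Measure.pi fun _ => gaussianReal 0 1)
    (fun _ _ _ => measure_pi_submodule_eq_zero _) zstar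
  have : 21 * (n i : ℝ) ≤ 10 * n (i + 1) := mod_cast hn i hi
  linarith
end

section
/- (Multi-layer ℓ∞ error bound for layer-wise LP inversion.) Let d ≥ 1, let n₀ = k, n₁, …, n_d be positive integers, and let W_i ∈ ℝ^{n_i × n_{i−1}} for i = 1,…,d. Let c ∈ (0,2] and suppose each W_i (m_i, c)-extends the ℓ∞ norm for some integer m_i > n_{i−1}. Let z* ∈ ℝ^k, define z₀* = z* and z_i* = ReLU(W_i z_{i−1}*) for i = 1,…,d, and set ε_i = (2/c)^{d−i}·ε. Suppose that for every i ∈ {1,…,d}, the vector z_i* has at least m_i coordinates strictly greater than 2·ε_i. Let e ∈ ℝ^{n_d} with ‖e‖_∞ ≤ ε and x = z_d* + e. Then for every chain of vectors ẑ_d = x, ẑ_{d−1} ∈ ℝ^{n_{d−1}}, …, ẑ₀ ∈ ℝ^{k} in which, for each i = d, d−1, …, 1, the vector ẑ_{i−1} is ε_i-feasible for (W_i, ẑ_i), one has ‖ẑ₀ − z*‖_∞ ≤ (2/c)^d · ε. -/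
/-- `W` `(m,c)`-extends the `ℓ∞` norm: for every index set `I` with `|I| ≥ m` and every
`a ∈ ℝ^k`, `‖W_{I,:}a‖_∞ ≥ c‖a‖_∞` (here `‖a‖` is the sup norm on `Fin k → ℝ`, and the
left-hand sup over rows in `I` is expressed by an existential witness). -/
def ExtendsLinf {n k : ℕ} (W : Matrix (Fin n) (Fin k) ℝ) (m : ℕ) (c : ℝ) : Prop :=
  ∀ I : Finset (Fin n), m ≤ I.card → ∀ a : Fin k → ℝ, ∃ i ∈ I, c * ‖a‖ ≤ |W.mulVec a i|

/-- `z` is `δ`-feasible for `(W, y)`: `|w_j·z − y_j| ≤ δ` for every `j` with `y_j > δ`,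
and `w_j·z ≤ y_j + δ` for every `j` with `y_j ≤ δ`. -/
def InfFeasible {n k : ℕ} (W : Matrix (Fin n) (Fin k) ℝ) (y : Fin n → ℝ) (δ : ℝ)
    (z : Fin k → ℝ) : Prop :=
  ∀ j, (δ < y j → |W.mulVec z j - y j| ≤ δ) ∧ (y j ≤ δ → W.mulVec z j ≤ y j + δ)

/-! A coordinate of the true activation `y* = ReLU(W z*)` that exceeds `2δ` is not clipped, and the
perturbed observation stays above `δ` there, so feasibility pins `W ẑ` to within `2δ` of `W z*` on
all these coordinates. There are enough of them for the extension property to give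
`c ‖ẑ - z*‖ ≤ 2δ`; each inverted layer thus multiplies the error by at most `2 / c`. -/

theorem relu_eq_self_of_pos {t : ℝ} (h : 0 < relu t) : relu t = t :=
  max_eq_left (lt_max_iff.mp h |>.resolve_right (lt_irrefl 0)).le

theorem mul_div_pow_sub_eq {K : Type*} [Field K] {a c : K} (hc : c ≠ 0) (b : K) {i d : ℕ}
    (hi : i < d) : c * ((a / c) ^ (d - i) * b) = a * ((a / c) ^ (d - (i + 1)) * b) := by
  obtain ⟨k, rfl⟩ := Nat.exists_eq_add_of_lt hi
  rw [show i + k + 1 - i = k + 1 by omega, show i + k + 1 - (i + 1) = k by omega, pow_succ]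
  field_simp

section SingleLayer

variable {n k m : ℕ} {W : Matrix (Fin n) (Fin k) ℝ} {c δ : ℝ}

theorem ExtendsLinf.mul_norm_le (hW : ExtendsLinf W m c) {I : Finset (Fin n)} (hI : m ≤ I.card)
    {a : Fin k → ℝ} {r : ℝ} (hr : ∀ i ∈ I, |W.mulVec a i| ≤ r) : c * ‖a‖ ≤ r := by
  obtain ⟨i, hiI, hi⟩ := hW I hI a
  exact hi.trans (hr i hiI)

theorem InfFeasible.abs_mulVec_sub_le {y : Fin n → ℝ} {z : Fin k → ℝ} (hz : InfFeasible W y δ z)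
    {j : Fin n} {t : ℝ} (hyt : |y j - t| ≤ δ) (ht : 2 * δ < t) :
    |W.mulVec z j - t| ≤ 2 * δ := by
  have hy : δ < y j := by linarith [(abs_le.mp hyt).1]
  calc |W.mulVec z j - t| ≤ |W.mulVec z j - y j| + |y j - t| := abs_sub_le _ _ _
    _ ≤ δ + δ := add_le_add ((hz j).1 hy) hyt
    _ = 2 * δ := (two_mul δ).symm

theorem ExtendsLinf.mul_norm_sub_le_of_infFeasible (hW : ExtendsLinf W m c)
    {z z' : Fin k → ℝ} {y y' : Fin n → ℝ} (hy : y = fun j => relu (W.mulVec z j))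
    (hbig : m ≤ (Finset.univ.filter fun j => 2 * δ < y j).card)
    (hclose : ‖y' - y‖ ≤ δ) (hz' : InfFeasible W y' δ z') :
    c * ‖z' - z‖ ≤ 2 * δ := by
  refine hW.mul_norm_le hbig fun j hj => ?_
  have hlarge : 2 * δ < y j := (Finset.mem_filter.mp hj).2
  have hδ : 0 ≤ δ := (norm_nonneg _).trans hclose
  have hpos : 0 < y j := by linarith
  have hactive : y j = W.mulVec z j := by
    subst hy
    exact relu_eq_self_of_pos hpos
  rw [Matrix.mulVec_sub, Pi.sub_apply, ← hactive]
  exact hz'.abs_mulVec_sub_le ((norm_le_pi_norm (y' - y) j).trans hclose) hlarge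

end SingleLayer

theorem multilayer_linf_error_bound_general {d : ℕ} {n : ℕ → ℕ}
    {W : ∀ i : ℕ, Matrix (Fin (n (i + 1))) (Fin (n i)) ℝ} {m : ℕ → ℕ} {c δ : ℕ → ℝ}
    (hc : ∀ i < d, 0 < c i) (hδ : ∀ i < d, 2 * δ (i + 1) ≤ c i * δ i)
    (hext : ∀ i < d, ExtendsLinf (W i) (m i) (c i))
    {zs zh : ∀ j : ℕ, Fin (n j) → ℝ}
    (hzs : ∀ i < d, zs (i + 1) = fun j => relu ((W i).mulVec (zs i) j))
    (hbig : ∀ i < d, m i ≤ (Finset.univ.filter fun j => 2 * δ (i + 1) < zs (i + 1) j).card)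
    (hlast : ‖zh d - zs d‖ ≤ δ d)
    (hfeas : ∀ i < d, InfFeasible (W i) (zh (i + 1)) (δ (i + 1)) (zh i))
    {i : ℕ} (hi : i ≤ d) : ‖zh i - zs i‖ ≤ δ i := by
  induction hi using Nat.decreasingInduction with
  | self => exact hlast
  | of_succ i hi ih =>
    have hlayer : c i * ‖zh i - zs i‖ ≤ 2 * δ (i + 1) :=
      (hext i hi).mul_norm_sub_le_of_infFeasible (hzs i hi) (hbig i hi) ih (hfeas i hi)
    exact le_of_mul_le_mul_left (hlayer.trans (hδ i hi)) (hc i hi)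

/-- **Multi-layer `ℓ∞` error bound for layer-wise LP inversion.**
Layers are indexed `0,…,d−1`: the `(i+1)`-st layer has weight matrix
`W i ∈ ℝ^{n(i+1) × n(i)}` which `(m i, c)`-extends the `ℓ∞` norm with `m i > n i`,
`c ∈ (0,2]`.  The ground-truth activations are `zs 0 = z*`,
`zs (i+1) = ReLU(W i · zs i)`, with tolerances `ε_{i+1} = (2/c)^{d−(i+1)}·ε`, and each
`zs (i+1)` has at least `m i` coordinates strictly greater than `2·ε_{i+1}`.  Given
`x = zs d + e` with `‖e‖_∞ ≤ ε`, any chain `ẑ d = x, ẑ (d−1), …, ẑ 0` in which `ẑ i`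
is `ε_{i+1}`-feasible for `(W i, ẑ (i+1))` satisfies `‖ẑ 0 − z*‖_∞ ≤ (2/c)^d·ε`. -/
theorem multilayer_linf_error_bound
    (d : ℕ) (hd : 1 ≤ d) (n : ℕ → ℕ)
    (W : ∀ i : ℕ, Matrix (Fin (n (i + 1))) (Fin (n i)) ℝ)
    (m : ℕ → ℕ) (c ε : ℝ) (hc : 0 < c) (hc2 : c ≤ 2)
    (hm : ∀ i < d, n i < m i)
    (hext : ∀ i < d, ExtendsLinf (W i) (m i) c)
    (zstar : Fin (n 0) → ℝ) (zs : ∀ j : ℕ, Fin (n j) → ℝ)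
    (hzs0 : zs 0 = zstar)
    (hzs : ∀ i < d, zs (i + 1) = fun j => relu ((W i).mulVec (zs i) j))
    (hbig : ∀ i < d,
      m i ≤ (Finset.univ.filter fun j => 2 * ((2 / c) ^ (d - (i + 1)) * ε) < zs (i + 1) j).card)
    (e : Fin (n d) → ℝ) (he : ‖e‖ ≤ ε)
    (x : Fin (n d) → ℝ) (hx : x = fun j => zs d j + e j)
    (zh : ∀ j : ℕ, Fin (n j) → ℝ) (hzhd : zh d = x)
    (hfeas : ∀ i < d, InfFeasible (W i) (zh (i + 1)) ((2 / c) ^ (d - (i + 1)) * ε) (zh i)) :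
    ‖zh 0 - zstar‖ ≤ (2 / c) ^ d * ε := by
  have hlast : ‖zh d - zs d‖ ≤ (2 / c) ^ (d - d) * ε := by
    simpa [hzhd, hx, ← Pi.add_def] using he
  exact hzs0 ▸ multilayer_linf_error_bound_general (δ := fun i => (2 / c) ^ (d - i) * ε)
    (fun _ _ => hc) (fun _ hi => (mul_div_pow_sub_eq hc.ne' ε hi).ge) hext hzs hbig hlast hfeas
    d.zero_le
end
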